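/- If S and T are bounded operators on a Hilbert space such that both ST and TS are trace class, then Tr(ST) = Tr(TS); in particular the trace of the commutator [S,T] = ST - TS vanishes. -/

import Mathlib

open scoped InnerProductSpace

/-- Trace class (formulated via absolute summability of diagonal matrix
entries in every Hilbert basis). -/
def IsTraceClass {H : Type*} [NormedAddCommGroup H] [InnerProductSpace ℂ H]
    (A : H →L[ℂ] H) : Prop :=
  ∀ (ι : Type) (b : HilbertBasis ι ℂ H),
    Summable (fun i => ‖⟪A (b i), b i⟫_ℂ‖)


open Filter Topology

set_option linter.unusedSectionVars false
set_option linter.deprecated false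

namespace TrAux

variable {H : Type} [NormedAddCommGroup H] [InnerProductSpace ℂ H] [CompleteSpace H]

/-- Matrix trace in a basis. -/
noncomputable def tr {ι : Type} (b : HilbertBasis ι ℂ H) (A : H →L[ℂ] H) : ℂ :=
  ∑' i, ⟪A (b i), b i⟫_ℂ

def HS {ι : Type} (b : HilbertBasis ι ℂ H) (A : H →L[ℂ] H) : Prop :=
  Summable (fun i => ‖A (b i)‖ ^ 2)

lemma parseval {ι : Type} (b : HilbertBasis ι ℂ H) (x : H) :
    HasSum (fun i => ‖⟪x, b i⟫_ℂ‖ ^ 2) (‖x‖ ^ 2) := by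
  have h := b.hasSum_inner_mul_inner x x
  have h2 := Complex.hasSum_re h
  have e : (⟪x, x⟫_ℂ).re = ‖x‖ ^ 2 := by
    rw [inner_self_eq_norm_sq_to_K]; norm_cast
  rw [e] at h2
  convert h2 using 2 with i
  rw [← inner_conj_symm (b i) x, Complex.mul_conj, Complex.normSq_eq_norm_sq]
  norm_cast

lemma hs_iff {ι κ : Type} (b : HilbertBasis ι ℂ H) (c : HilbertBasis κ ℂ H) (A : H →L[ℂ] H) :
    HS b A ↔ Summable (fun p : ι × κ => ‖⟪A (b p.1), c p.2⟫_ℂ‖ ^ 2) := by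
  rw [summable_prod_of_nonneg (fun p => by positivity)]
  simp only [(parseval c _).tsum_eq]
  exact ⟨fun h => ⟨fun i => (parseval c _).summable, h⟩, fun h => h.2⟩

lemma hs_adj {ι κ : Type} (b : HilbertBasis ι ℂ H) (c : HilbertBasis κ ℂ H) (A : H →L[ℂ] H)
    (h : HS b A) : HS c (star A) := by
  rw [hs_iff c b]
  rw [hs_iff b c] at h
  rw [← (Equiv.prodComm ι κ).summable_iff]
  convert h using 2 with p
  simp only [Function.comp, Equiv.prodComm_apply, Prod.fst_swap, Prod.snd_swap,
    ContinuousLinearMap.star_eq_adjoint, ContinuousLinearMap.adjoint_inner_left]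
  rw [← inner_conj_symm, Complex.norm_conj]

lemma hs_left {ι : Type} (b : HilbertBasis ι ℂ H) (Y A : H →L[ℂ] H)
    (h : HS b A) : HS b (Y * A) := by
  refine Summable.of_nonneg_of_le (fun i => by positivity) (fun i => ?_) (h.mul_left (‖Y‖ ^ 2))
  rw [← mul_pow]
  gcongr
  exact Y.le_opNorm _

lemma hs_right {ι : Type} (b : HilbertBasis ι ℂ H) (Y A : H →L[ℂ] H)
    (h : HS b A) : HS b (A * Y) := by
  have := hs_adj b b _ (hs_left b (star Y) _ (hs_adj b b _ h))
  simpa using this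

lemma summable_pair {ι : Type} (b : HilbertBasis ι ℂ H) (P Q : H →L[ℂ] H)
    (hP : HS b P) (hQ : HS b Q) :
    Summable (fun p : ι × ι => ⟪Q (b p.1), b p.2⟫_ℂ * ⟪P (b p.2), b p.1⟫_ℂ) := by
  rw [hs_iff b b] at hP hQ
  have hP' := (Equiv.prodComm ι ι).summable_iff.2 hP
  refine Summable.of_norm_bounded (hQ.add hP') (fun p => ?_)
  simp only [Function.comp, Equiv.prodComm_apply, Prod.fst_swap, Prod.snd_swap, norm_mul]
  nlinarith [sq_nonneg (‖⟪Q (b p.1), b p.2⟫_ℂ‖ - ‖⟪P (b p.2), b p.1⟫_ℂ‖),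
    sq_nonneg ‖⟪Q (b p.1), b p.2⟫_ℂ‖, sq_nonneg ‖⟪P (b p.2), b p.1⟫_ℂ‖]

lemma hasSum_row {ι : Type} (b : HilbertBasis ι ℂ H) (P Q : H →L[ℂ] H) (i : ι) :
    HasSum (fun j => ⟪Q (b i), b j⟫_ℂ * ⟪P (b j), b i⟫_ℂ) ⟪(P * Q) (b i), b i⟫_ℂ := by
  have := b.hasSum_inner_mul_inner (Q (b i)) (star P (b i))
  simpa [ContinuousLinearMap.star_eq_adjoint, ContinuousLinearMap.adjoint_inner_right] using this

lemma hs_summable {ι : Type} (b : HilbertBasis ι ℂ H) (P Q : H →L[ℂ] H)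
    (hP : HS b P) (hQ : HS b Q) : Summable (fun i => ⟪(P * Q) (b i), b i⟫_ℂ) := by
  have h := (summable_pair b P Q hP hQ).prod
  simpa only [(hasSum_row b P Q _).tsum_eq] using h

lemma hs_comm {ι : Type} (b : HilbertBasis ι ℂ H) (P Q : H →L[ℂ] H)
    (hP : HS b P) (hQ : HS b Q) : tr b (P * Q) = tr b (Q * P) := by
  have h1 : tr b (P * Q) = ∑' i, ∑' j, ⟪Q (b i), b j⟫_ℂ * ⟪P (b j), b i⟫_ℂ :=
    tsum_congr fun i => (hasSum_row b P Q i).tsum_eq.symm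
  have h2 : tr b (Q * P) = ∑' j, ∑' i, ⟪Q (b i), b j⟫_ℂ * ⟪P (b j), b i⟫_ℂ := by
    refine tsum_congr fun j => ?_
    rw [← (hasSum_row b Q P j).tsum_eq]
    exact tsum_congr fun i => mul_comm _ _
  rw [h1, h2]
  exact Summable.tsum_comm (f := fun j i => ⟪Q (b i), b j⟫_ℂ * ⟪P (b j), b i⟫_ℂ)
    ((Equiv.prodComm ι ι).summable_iff.2 (summable_pair b P Q hP hQ))

def Nice {ι : Type} (b : HilbertBasis ι ℂ H) (A : H →L[ℂ] H) : Prop :=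
  (∀ Y Z : H →L[ℂ] H, Summable (fun i => ⟪(Y * A * Z) (b i), b i⟫_ℂ)) ∧
  (∀ Y Z : H →L[ℂ] H, tr b (Y * A * Z) = tr b (A * (Z * Y))) ∧
  (∀ (K : ℕ → H →L[ℂ] H) (L : H →L[ℂ] H) (C : ℝ), (∀ n, ‖K n‖ ≤ C) →
    (∀ x, Tendsto (fun n => K n x) atTop (𝓝 (L x))) →
    Tendsto (fun n => tr b (A * K n)) atTop (𝓝 (tr b (A * L))))

lemma nice_sq {ι : Type} (b : HilbertBasis ι ℂ H) (G : H →L[ℂ] H) (hG : IsSelfAdjoint G)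
    (h : HS b G) : Nice b (G * G) := by
  refine ⟨fun Y Z => ?_, fun Y Z => ?_, fun K L C hC hK => ?_⟩
  · have := hs_summable b _ _ (hs_left b Y G h) (hs_right b Z G h)
    simpa only [mul_assoc] using this
  · have h1 := hs_comm b _ _ (hs_left b Y G h) (hs_right b Z G h)
    have h2 := hs_comm b _ _ h (hs_right b (Z * Y) G h)
    simp only [mul_assoc] at h1 h2 ⊢
    rw [h1, h2]
  · have key : ∀ X : H →L[ℂ] H, tr b (G * G * X) = ∑' i, ⟪X (G (b i)), G (b i)⟫_ℂ := by
      intro X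
      rw [mul_assoc, hs_comm b _ _ h (hs_right b X G h)]
      unfold tr
      congr 1; ext i
      have : ContinuousLinearMap.adjoint G = G := hG
      conv_rhs => rw [← this, ContinuousLinearMap.adjoint_inner_right, this]
      rfl
    simp only [key]
    refine tendsto_tsum_of_dominated_convergence (bound := fun i => C * ‖G (b i)‖ ^ 2)
      (Summable.mul_left C h) (fun i => (hK _).inner tendsto_const_nhds) (.of_forall fun n i => ?_)
    calc _ ≤ ‖K n (G (b i))‖ * ‖G (b i)‖ := norm_inner_le_norm _ _
      _ ≤ (‖K n‖ * ‖G (b i)‖) * ‖G (b i)‖ := by gcongr; exact (K n).le_opNorm _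
      _ ≤ (C * ‖G (b i)‖) * ‖G (b i)‖ := by gcongr; exact hC n
      _ = _ := by ring

lemma nice_summable' {ι : Type} {b : HilbertBasis ι ℂ H} {A : H →L[ℂ] H} (h : Nice b A)
    (Z : H →L[ℂ] H) : Summable (fun i => ⟪(A * Z) (b i), b i⟫_ℂ) := by
  simpa using h.1 1 Z

lemma tr_add {ι : Type} (b : HilbertBasis ι ℂ H) (A B : H →L[ℂ] H)
    (hA : Summable (fun i => ⟪A (b i), b i⟫_ℂ)) (hB : Summable (fun i => ⟪B (b i), b i⟫_ℂ)) :
    tr b (A + B) = tr b A + tr b B := by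
  unfold tr
  simp only [ContinuousLinearMap.add_apply, inner_add_left]
  exact hA.tsum_add hB

lemma tr_smul {ι : Type} (b : HilbertBasis ι ℂ H) (c : ℂ) (A : H →L[ℂ] H) :
    tr b (c • A) = (starRingEnd ℂ) c * tr b A := by
  unfold tr
  simp only [ContinuousLinearMap.smul_apply, inner_smul_left, tsum_mul_left]

lemma nice_add {ι : Type} {b : HilbertBasis ι ℂ H} {A B : H →L[ℂ] H} (hA : Nice b A)
    (hB : Nice b B) : Nice b (A + B) := by
  refine ⟨fun Y Z => ?_, fun Y Z => ?_, fun K L C hC hK => ?_⟩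
  · simp only [mul_add, add_mul, ContinuousLinearMap.add_apply, inner_add_left]
    exact (hA.1 Y Z).add (hB.1 Y Z)
  · simp only [mul_add, add_mul]
    rw [tr_add b _ _ (hA.1 Y Z) (hB.1 Y Z), hA.2.1, hB.2.1,
      tr_add b _ _ (nice_summable' hA _) (nice_summable' hB _)]
  · simp only [add_mul, tr_add b _ _ (nice_summable' hA _) (nice_summable' hB _)]
    exact (hA.2.2 K L C hC hK).add (hB.2.2 K L C hC hK)

lemma nice_smul {ι : Type} {b : HilbertBasis ι ℂ H} {A : H →L[ℂ] H} (c : ℂ) (hA : Nice b A) :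
    Nice b (c • A) := by
  refine ⟨fun Y Z => ?_, fun Y Z => ?_, fun K L C hC hK => ?_⟩
  · simp only [mul_smul_comm, smul_mul_assoc, ContinuousLinearMap.smul_apply, inner_smul_left]
    exact (hA.1 Y Z).mul_left _
  · simp only [mul_smul_comm, smul_mul_assoc, tr_smul, hA.2.1 Y Z]
  · simp only [smul_mul_assoc, tr_smul]
    exact (hA.2.2 K L C hC hK).const_mul _

lemma adapted (K : Submodule ℂ H) [CompleteSpace K] :
    ∃ (w : Set H) (b : HilbertBasis w ℂ H), ∀ i, b i ∈ K ∨ b i ∈ Kᗮ := by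
  obtain ⟨v, c, hc⟩ := exists_hilbertBasis ℂ K
  let s : Set H := Subtype.val '' v
  have hs : Orthonormal ℂ ((↑) : s → H) := by
    have h1 : Orthonormal ℂ (fun i : v => ((c i : K) : H)) :=
      c.orthonormal.comp_linearIsometry K.subtypeₗᵢ
    have h2 := h1.toSubtypeRange
    have : Set.range (fun i : v => ((c i : K) : H)) = s := by
      rw [hc]; ext x; simp [s]
    rwa [this] at h2
  obtain ⟨w, b, hsw, hb⟩ := hs.exists_hilbertBasis_extension
  refine ⟨w, b, fun i => ?_⟩
  by_cases his : (i : H) ∈ s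
  · left
    obtain ⟨k, hk, e⟩ := his
    rw [hb]; rw [← e]; exact k.2
  · right
    rw [Submodule.mem_orthogonal']
    intro u hu
    have h := c.hasSum_inner_mul_inner (K.orthogonalProjection (b i)) ⟨u, hu⟩
    have h0 : ∀ j, ⟪K.orthogonalProjection (b i), c j⟫_ℂ = 0 := by
      intro j
      rw [Submodule.inner_orthogonalProjection_eq_of_mem_right]
      have hj : ((c j : K) : H) ∈ s := ⟨c j, by rw [hc]; exact j.2, rfl⟩
      have := b.orthonormal.2 (i := i) (j := ⟨_, hsw hj⟩) (fun e => his (by rw [e]; exact hj))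
      rwa [hb] at this ⊢
    simp only [h0, zero_mul] at h
    have h' := h.unique hasSum_zero
    rwa [Submodule.inner_orthogonalProjection_eq_of_mem_right] at h'

lemma nice_pos {ι : Type} (b : HilbertBasis ι ℂ H) (A : H →L[ℂ] H) (hA : IsSelfAdjoint A)
    (h : IsTraceClass A) : Nice b A⁺ := by
  have hp : 0 ≤ A⁺ := CFC.posPart_nonneg A
  have hd : A⁺ - A⁻ = A := CFC.posPart_sub_negPart A hA
  have hm : A⁻ * A⁺ = 0 := CFC.negPart_mul_posPart A
  have hsq := CFC.sqrt_mul_sqrt_self A⁺ hp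
  have hsa : IsSelfAdjoint (CFC.sqrt A⁺) := (CFC.sqrt_nonneg A⁺).isSelfAdjoint
  rw [← hsq]
  refine nice_sq b _ hsa ?_
  let K : Submodule ℂ H := LinearMap.ker (A⁻ : H →L[ℂ] H).toLinearMap
  have : IsClosed (K : Set H) := ContinuousLinearMap.isClosed_ker _
  have : CompleteSpace K := this.completeSpace_coe
  obtain ⟨w, c, hc⟩ := adapted K
  rw [← hsa.star_eq]
  refine hs_adj c b _ ?_
  refine Summable.of_nonneg_of_le (fun i => by positivity) (fun i => ?_) (h w c)
  have e1 : ⟪A⁺ (c i), c i⟫_ℂ = (‖CFC.sqrt A⁺ (c i)‖ : ℂ) ^ 2 := by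
    have : ContinuousLinearMap.adjoint (CFC.sqrt A⁺) = CFC.sqrt A⁺ := hsa
    conv_lhs => rw [← hsq, ContinuousLinearMap.mul_apply, ← this,
      ContinuousLinearMap.adjoint_inner_left, this]
    exact inner_self_eq_norm_sq_to_K _
  have e2 : ‖CFC.sqrt A⁺ (c i)‖ ^ 2 = ‖⟪A⁺ (c i), c i⟫_ℂ‖ := by
    rw [e1]; simp
  rw [e2]
  rcases hc i with hi | hi
  · have : A (c i) = A⁺ (c i) := by
      conv_lhs => rw [← hd]
      have : A⁻ (c i) = 0 := hi
      simp [this]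
    rw [this]
  · have hk : A⁺ (c i) ∈ K := by
      show A⁻ (A⁺ (c i)) = 0
      rw [← ContinuousLinearMap.mul_apply, hm]; rfl
    rw [(Submodule.mem_orthogonal _ _).1 hi _ hk]
    simp

lemma tc_neg {A : H →L[ℂ] H} (h : IsTraceClass A) : IsTraceClass (-A) := by
  intro ι b
  simpa using h ι b

lemma nice_sa {ι : Type} (b : HilbertBasis ι ℂ H) (A : H →L[ℂ] H) (hA : IsSelfAdjoint A)
    (h : IsTraceClass A) : Nice b A := by
  have h1 := nice_pos b A hA h
  have h2 := nice_pos b (-A) hA.neg (tc_neg h)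
  rw [CFC.posPart_neg] at h2
  have := nice_add h1 (nice_smul (-1) h2)
  rwa [neg_one_smul, ← sub_eq_add_neg, CFC.posPart_sub_negPart A hA] at this

lemma tc_star {A : H →L[ℂ] H} (h : IsTraceClass A) : IsTraceClass (star A) := by
  intro ι b
  convert h ι b using 2 with i
  rw [ContinuousLinearMap.star_eq_adjoint, ContinuousLinearMap.adjoint_inner_left,
    ← inner_conj_symm, Complex.norm_conj]

lemma tc_add {A B : H →L[ℂ] H} (h : IsTraceClass A) (h' : IsTraceClass B) :
    IsTraceClass (A + B) := by
  intro ι b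
  refine Summable.of_nonneg_of_le (fun i => by positivity) (fun i => ?_) ((h ι b).add (h' ι b))
  rw [ContinuousLinearMap.add_apply, inner_add_left]
  exact norm_add_le _ _

lemma tc_smul {A : H →L[ℂ] H} (c : ℂ) (h : IsTraceClass A) : IsTraceClass (c • A) := by
  intro ι b
  simpa [inner_smul_left] using (h ι b).mul_right ‖c‖

lemma nice_tc {ι : Type} (b : HilbertBasis ι ℂ H) (A : H →L[ℂ] H)
    (h : IsTraceClass A) : Nice b A := by
  have e : A = (1 / 2 : ℂ) • (A + star A) +
      (-(Complex.I / 2)) • (Complex.I • A + (-Complex.I) • star A) := by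
    simp only [smul_add, smul_smul]
    have e1 : -(Complex.I / 2) * Complex.I = 1 / 2 := by
      have := Complex.I_mul_I; linear_combination (-1 / 2) * this
    have e2 : -(Complex.I / 2) * -Complex.I = -(1 / 2) := by
      have := Complex.I_mul_I; linear_combination (1 / 2) * this
    rw [e1, e2]
    module
  rw [e]
  refine nice_add (nice_smul _ (nice_sa b _ ?_ ?_)) (nice_smul _ (nice_sa b _ ?_ ?_))
  · exact IsSelfAdjoint.add_star_self A
  · exact tc_add h (tc_star h)
  · simp [IsSelfAdjoint, add_comm]
  · exact tc_add (tc_smul _ h) (tc_smul _ (tc_star h))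

open scoped ComplexOrder in
lemma resolvent (M : H →L[ℂ] H) (hM : 0 ≤ M) :
    ∃ (R : ℕ → H →L[ℂ] H) (L : H →L[ℂ] H),
      (∀ n : ℕ, R n * (M + ((1 / (n + 1 : ℝ) : ℝ) : ℂ) • 1) = 1) ∧
      (∀ n : ℕ, (M + ((1 / (n + 1 : ℝ) : ℝ) : ℂ) • 1) * R n = 1) ∧
      (∀ n, ‖R n * M‖ ≤ 2) ∧ IsSelfAdjoint L ∧ M * L = M ∧
      (∀ x, Tendsto (fun n => (R n * M) x) atTop (𝓝 (L x))) := by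
  have hpos : M.IsPositive := (ContinuousLinearMap.nonneg_iff_isPositive M).1 hM
  have hlow : ∀ (e : ℝ), 0 < e → ∀ y, e * ‖y‖ ≤ ‖(M + (e : ℂ) • 1) y‖ := by
    intro e he y
    rcases eq_or_ne y 0 with rfl | hy
    · simp
    have hy' : 0 < ‖y‖ := norm_pos_iff.2 hy
    have h1 : e * ‖y‖ ^ 2 ≤ (⟪(M + (e : ℂ) • 1) y, y⟫_ℂ).re := by
      have h0 : 0 ≤ (⟪M y, y⟫_ℂ).re := hpos.re_inner_nonneg_left y
      have h3 : (⟪y, y⟫_ℂ) = ((‖y‖ ^ 2 : ℝ) : ℂ) := by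
        rw [inner_self_eq_norm_sq_to_K]; norm_cast
      rw [ContinuousLinearMap.add_apply, inner_add_left, ContinuousLinearMap.smul_apply,
        inner_smul_left, ContinuousLinearMap.one_apply, h3, Complex.conj_ofReal,
        ← Complex.ofReal_mul, Complex.add_re, Complex.ofReal_re]
      linarith
    have h2 : (⟪(M + (e : ℂ) • 1) y, y⟫_ℂ).re ≤ ‖(M + (e : ℂ) • 1) y‖ * ‖y‖ :=
      (Complex.re_le_norm _).trans (norm_inner_le_norm _ _)
    nlinarith
  have hunit : ∀ (e : ℝ), 0 < e → IsUnit (M + (e : ℂ) • 1) := by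
    intro e he
    refine CStarAlgebra.isUnit_of_le ((e : ℂ) • (1 : H →L[ℂ] H)) (le_add_of_nonneg_left hM) ?_
    refine IsStrictlyPositive.iff_of_unital.2 ⟨?_, ?_⟩
    · have : (0 : H →L[ℂ] H) ≤ 1 := zero_le_one
      exact smul_nonneg (by exact_mod_cast he.le) this
    · have hne : (e : ℂ) ≠ 0 := by exact_mod_cast he.ne'
      exact ⟨⟨(e : ℂ) • 1, (e : ℂ)⁻¹ • 1,
        by rw [smul_mul_smul_comm, mul_inv_cancel₀ hne, one_smul, one_mul],
        by rw [smul_mul_smul_comm, inv_mul_cancel₀ hne, one_smul, one_mul]⟩, rfl⟩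
  let ε : ℕ → ℝ := fun n => 1 / (n + 1 : ℝ)
  have hε : ∀ n, 0 < ε n := fun n => by positivity
  have hε0 : Tendsto ε atTop (𝓝 0) := tendsto_one_div_add_atTop_nhds_zero_nat
  let R : ℕ → H →L[ℂ] H := fun n => Ring.inverse (M + (ε n : ℂ) • 1)
  have hR1 : ∀ n, R n * (M + (ε n : ℂ) • 1) = 1 := fun n =>
    Ring.inverse_mul_cancel _ (hunit _ (hε n))
  have hR2 : ∀ n, (M + (ε n : ℂ) • 1) * R n = 1 := fun n =>
    Ring.mul_inverse_cancel _ (hunit _ (hε n))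
  have hRn : ∀ n x, ε n * ‖R n x‖ ≤ ‖x‖ := by
    intro n x
    have := hlow (ε n) (hε n) (R n x)
    rwa [← ContinuousLinearMap.mul_apply, hR2] at this
  have hK : ∀ n x, (R n * M) x = x - (ε n : ℂ) • R n x := by
    intro n x
    have := congrArg (fun F : H →L[ℂ] H => F x) (hR1 n)
    simp only [mul_add, mul_smul_comm, mul_one, ContinuousLinearMap.add_apply,
      ContinuousLinearMap.smul_apply, ContinuousLinearMap.one_apply] at this
    rw [eq_sub_iff_add_eq]; exact this
  have hsm : ∀ n x, ‖(ε n : ℂ) • R n x‖ ≤ ‖x‖ := by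
    intro n x
    rw [norm_smul, Complex.norm_real, Real.norm_of_nonneg (hε n).le]
    exact hRn n x
  have hKn : ∀ n x, ‖(R n * M) x‖ ≤ 2 * ‖x‖ := by
    intro n x
    rw [hK]
    have := norm_sub_le x ((ε n : ℂ) • R n x)
    linarith [hsm n x]
  let K : Submodule ℂ H := LinearMap.ker M.toLinearMap
  have hKc : IsClosed (K : Set H) := ContinuousLinearMap.isClosed_ker _
  have : CompleteSpace K := hKc.completeSpace_coe
  have hMsa : ContinuousLinearMap.adjoint M = M := hpos.isSelfAdjoint
  have hker : ∀ x, M (K.starProjection x) = 0 := fun x => K.starProjection_apply_mem x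
  refine ⟨R, 1 - K.starProjection, hR1, hR2, fun n => ?_, ?_, ?_, fun x => ?_⟩
  · exact ContinuousLinearMap.opNorm_le_bound _ (by norm_num) (hKn n)
  · exact (IsSelfAdjoint.one _).sub (isSelfAdjoint_starProjection K)
  · ext x; simp [hker]
  · set y := (1 - K.starProjection) x with hy
    have hxy : ∀ n, (R n * M) x = (R n * M) y := by
      intro n; simp [hy, hker]
    have hyK : y ∈ Kᗮ := by
      simp only [hy]
      exact K.sub_starProjection_mem_orthogonal x
    have hcl : y ∈ closure (Set.range M) := by
      have h1 := ContinuousLinearMap.orthogonal_ker M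
      rw [hMsa] at h1
      have h2 : y ∈ (LinearMap.range M.toLinearMap).topologicalClosure := by
        rw [← h1]; exact hyK
      exact h2
    simp only [hxy, hK]
    suffices h : Tendsto (fun n => (ε n : ℂ) • R n y) atTop (𝓝 0) by
      simpa using tendsto_const_nhds.sub h
    rw [Metric.tendsto_atTop]
    intro δ hδ
    obtain ⟨_, ⟨z, rfl⟩, hz⟩ := Metric.mem_closure_iff.1 hcl (δ / 2) (by positivity)
    have ht : Tendsto (fun n => ε n * (2 * ‖z‖)) atTop (𝓝 0) := by
      simpa using hε0.mul_const (2 * ‖z‖)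
    obtain ⟨N, hN⟩ := eventually_atTop.1 (ht.eventually_lt_const (show 0 < δ / 2 by positivity))
    refine ⟨N, fun n hn => ?_⟩
    rw [dist_zero_right]
    have e : (ε n : ℂ) • R n y = (ε n : ℂ) • R n (y - M z) + (ε n : ℂ) • (R n * M) z := by
      rw [ContinuousLinearMap.mul_apply, ← smul_add, ← map_add, sub_add_cancel]
    rw [e]
    have h1 := hsm n (y - M z)
    have h2 : ‖(ε n : ℂ) • (R n * M) z‖ ≤ ε n * (2 * ‖z‖) := by
      rw [norm_smul, Complex.norm_real, Real.norm_of_nonneg (hε n).le]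
      exact mul_le_mul_of_nonneg_left (hKn n z) (hε n).le
    rw [dist_eq_norm] at hz
    have h3 := norm_add_le ((ε n : ℂ) • R n (y - M z)) ((ε n : ℂ) • (R n * M) z)
    linarith [hN n hn]

lemma main {ι : Type} (b : HilbertBasis ι ℂ H) (S T : H →L[ℂ] H)
    (hST : IsTraceClass (S * T)) (hTS : IsTraceClass (T * S)) :
    tr b (S * T) = tr b (T * S) := by
  have h1 := nice_tc b _ hST
  have h2 := nice_tc b _ hTS
  obtain ⟨R, P, hR1, hR2, hRn, hPs, hP, hRt⟩ := resolvent (star T * T) (star_mul_self_nonneg T)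
  obtain ⟨R', Q, hR1', hR2', hRn', hQs, hQ, hRt'⟩ :=
    resolvent (T * star T) (mul_star_self_nonneg T)
  have cancel : ∀ U X : H →L[ℂ] H, star U * U * X = star U * U → U * X = U := by
    intro U X h
    have h0 : star (U * X - U) * (U * X - U) = 0 := by
      have : star (U * X - U) * (U * X - U)
          = star X * (star U * U * X - star U * U) - (star U * U * X - star U * U) := by
        simp only [star_sub, star_mul]; noncomm_ring
      rw [this, h]; simp
    exact sub_eq_zero.1 (CStarRing.star_mul_self_eq_zero_iff _ |>.1 h0)
  have hTP : T * P = T := cancel T P hP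
  have hQT : Q * T = T := by
    have := cancel (star T) Q (by simpa using hQ)
    have := congrArg star this
    simpa [hQs.star_eq] using this
  have hinter : ∀ n, T * R n = R' n * T := by
    intro n
    calc T * R n = R' n * (T * star T + ((1 / (n + 1 : ℝ) : ℝ) : ℂ) • 1) * (T * R n) := by
          rw [hR1', one_mul]
      _ = R' n * T * ((star T * T + ((1 / (n + 1 : ℝ) : ℝ) : ℂ) • 1) * R n) := by
          simp only [mul_add, add_mul, mul_smul_comm, smul_mul_assoc, mul_one, one_mul, mul_assoc]
      _ = _ := by rw [hR2, mul_one]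
  have heq : ∀ n, tr b (S * T * (R n * (star T * T))) = tr b (T * S * (R' n * (T * star T))) := by
    intro n
    have := h1.2.1 T (R n * star T)
    rw [show S * T * (R n * (star T * T)) = S * T * (R n * star T * T) by
      simp only [mul_assoc], ← this]
    congr 1
    rw [← mul_assoc (R' n), ← hinter]
    simp only [mul_assoc]
  have t1 := h1.2.2 _ P 2 hRn hRt
  have t2 := h2.2.2 _ Q 2 hRn' hRt'
  simp only [heq] at t1
  have e := tendsto_nhds_unique t1 t2
  rw [mul_assoc, hTP] at e
  rw [e]
  have := h2.2.1 Q 1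
  rw [one_mul, mul_one] at this
  rw [← this, ← mul_assoc, hQT]

end TrAux

/-- If ST and TS are trace class, then Tr(ST) = Tr(TS); in particular the
trace of the commutator [S,T] vanishes. -/
theorem trace_comm_vanishes {H : Type} [NormedAddCommGroup H]
    [InnerProductSpace ℂ H] [CompleteSpace H]
    (S T : H →L[ℂ] H)
    (hST : IsTraceClass (S ∘L T)) (hTS : IsTraceClass (T ∘L S))
    (ι : Type) (b : HilbertBasis ι ℂ H) :
    (∑' i, ⟪(S ∘L T) (b i), b i⟫_ℂ) = ∑' i, ⟪(T ∘L S) (b i), b i⟫_ℂ ∧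
    (∑' i, ⟪(S ∘L T - T ∘L S) (b i), b i⟫_ℂ) = 0 := by
  have h := TrAux.main b S T hST hTS
  refine ⟨h, ?_⟩
  have h1 := (hST ι b).of_norm
  have h2 := (hTS ι b).of_norm
  have e := h1.tsum_sub h2
  simp only [ContinuousLinearMap.sub_apply, inner_sub_left]
  rw [e]
  exact sub_eq_zero.2 h
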